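/- There exists a constant C > 0 such that for all n ≥ 2, lex(n, C_4^{1243}) ≤ C·n^{3/2}·log n; that is, every edge-ordered graph on n vertices avoiding the edge-ordered four-cycle C_4^{1243} has at most C·n^{3/2}·log n edges. -/

import Mathlib

/-- An edge-ordered graph: a finite simple graph on vertex set `Fin nv`
together with a labeling of (potential) edges.  The edge-order is the order of
the labels; the labeling is required to be injective on the edge set via
`EOGraph.Valid`. -/
structure EOGraph where
  nv : ℕ
  graph : SimpleGraph (Fin nv)
  label : Sym2 (Fin nv) → ℕ

namespace EOGraph

/-- The labeling is injective on the edge set, hence defines a linear order on the edges. -/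
def Valid (G : EOGraph) : Prop :=
  ∀ e ∈ G.graph.edgeSet, ∀ f ∈ G.graph.edgeSet, G.label e = G.label f → e = f

/-- The number of edges of an edge-ordered graph. -/
noncomputable def edges (G : EOGraph) : ℕ := G.graph.edgeSet.ncard

/-- `G.Contains H`: some subgraph of `G`, with the edge-order induced from `G`,
is isomorphic to `H` (via a graph isomorphism preserving the relative order of edges). -/
def Contains (G H : EOGraph) : Prop :=
  ∃ f : Fin H.nv ↪ Fin G.nv,
    (∀ a b, H.graph.Adj a b → G.graph.Adj (f a) (f b)) ∧
    ∀ a b c d, H.graph.Adj a b → H.graph.Adj c d →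
      (H.label s(a, b) < H.label s(c, d) ↔ G.label s(f a, f b) < G.label s(f c, f d))

/-- `G` avoids `H` if no subgraph of `G` (with the induced edge-order) is isomorphic to `H`. -/
def Avoids (G H : EOGraph) : Prop := ¬ G.Contains H

/-- `G` avoids a family if it avoids every member. -/
def AvoidsFam (G : EOGraph) (F : Set EOGraph) : Prop := ∀ H ∈ F, G.Avoids H

/-- Isomorphism of edge-ordered graphs. -/
def Iso (G H : EOGraph) : Prop :=
  ∃ f : Fin G.nv ≃ Fin H.nv,
    (∀ a b, G.graph.Adj a b ↔ H.graph.Adj (f a) (f b)) ∧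
    ∀ a b c d, G.graph.Adj a b → G.graph.Adj c d →
      (G.label s(a, b) < G.label s(c, d) ↔ H.label s(f a, f b) < H.label s(f c, f d))

end EOGraph

/-- A simple graph `G` can avoid the family `F` if some linear order on its edges
(given by a labeling injective on the edge set) makes it into an edge-ordered graph
avoiding `F`. -/
def CanAvoid {n : ℕ} (G : SimpleGraph (Fin n)) (F : Set EOGraph) : Prop :=
  ∃ L : Sym2 (Fin n) → ℕ, (EOGraph.mk n G L).Valid ∧ (EOGraph.mk n G L).AvoidsFam F

/-- The order chromatic number of a family of edge-ordered graphs: the least chromatic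
number of a finite simple graph that cannot avoid the family (`⊤` if every finite
simple graph can avoid it). -/
noncomputable def orderChrom (F : Set EOGraph) : ℕ∞ :=
  ⨅ (n : ℕ) (G : SimpleGraph (Fin n)) (_ : ¬ CanAvoid G F), G.chromaticNumber

/-- The Turán number `lex(n, F)`: the maximum number of edges of an edge-ordered graph
on `n` vertices avoiding the family `F`. -/
noncomputable def lexFam (n : ℕ) (F : Set EOGraph) : ℕ :=
  sSup {m : ℕ | ∃ G : EOGraph, G.nv = n ∧ G.Valid ∧ G.AvoidsFam F ∧ G.edges = m}

/-- Build a symmetric labeling from a function of the (min, max) of the two endpoints. -/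
def symLabel {N : ℕ} (f : Fin N → Fin N → ℕ) : Sym2 (Fin N) → ℕ :=
  Sym2.lift ⟨fun a b => f (min a b) (max a b), fun a b => by
    show f (min a b) (max a b) = f (min b a) (max b a)
    rw [min_comm, max_comm]⟩

/-- The edge-ordered path on `k` vertices `0, 1, …, k-1`, where the edge `{i, i+1}`
gets label `l[i]`. -/
def pathEO (k : ℕ) (l : List ℕ) : EOGraph where
  nv := k
  graph := SimpleGraph.fromRel (fun a b => (a : ℕ) + 1 = (b : ℕ))
  label := symLabel fun a _ => l.getD (a : ℕ) 0

/-- The edge-ordered four-cycle `C_4^{1243}` on vertices `a, b, c, d = 0, 1, 2, 3`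
with edges `ab, bc, cd, da` labeled `1, 2, 4, 3`, i.e. edge-order `ab < bc < da < cd`. -/
def C4_1243 : EOGraph where
  nv := 4
  graph := SimpleGraph.fromRel fun a b : Fin 4 => b = a + 1
  label := symLabel fun a b =>
    if (a : ℕ) = 0 ∧ (b : ℕ) = 1 then 1
    else if (a : ℕ) = 1 ∧ (b : ℕ) = 2 then 2
    else if (a : ℕ) = 2 ∧ (b : ℕ) = 3 then 4
    else if (a : ℕ) = 0 ∧ (b : ℕ) = 3 then 3
    else 0


namespace LexC4

open Finset Classical

set_option linter.unusedSectionVars false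

variable {V : Type} [Fintype V]

/-- A symmetric irreflexive relation with an injective symmetric labeling avoiding the cycle. -/
structure Good (S : V → V → Prop) (r : V → V → ℕ) : Prop where
  symm : ∀ a b, S a b → S b a
  irr : ∀ a, ¬ S a a
  rsymm : ∀ a b, r a b = r b a
  inj : ∀ a b c d, S a b → S c d → r a b = r c d → (a = c ∧ b = d) ∨ (a = d ∧ b = c)
  av : ∀ a b c d, S a b → S b c → S c d → S d a → r a b < r b c → r b c < r d a →
    r d a < r c d → False

theorem Good.mono {S T : V → V → Prop} {r : V → V → ℕ} (h : Good S r)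
    (hT : ∀ a b, T a b → T b a) (hs : ∀ a b, T a b → S a b) : Good T r where
  symm := hT
  irr := fun a ha => h.irr a (hs _ _ ha)
  rsymm := h.rsymm
  inj := fun a b c d h1 h2 h3 => h.inj a b c d (hs _ _ h1) (hs _ _ h2) h3
  av := fun a b c d h1 h2 h3 h4 => h.av a b c d (hs _ _ h1) (hs _ _ h2) (hs _ _ h3) (hs _ _ h4)

/-- Indicator of an increasing cherry. -/
noncomputable def I (S : V → V → Prop) (r : V → V → ℕ) (a b c : V) : ℝ :=
  if S a b ∧ S b c ∧ r a b < r b c then 1 else 0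

/-- Indicator of a cherry crossing the threshold. -/
noncomputable def Ix (S : V → V → Prop) (r : V → V → ℕ) (t : ℕ) (a b c : V) : ℝ :=
  if S a b ∧ S b c ∧ r a b < t ∧ t ≤ r b c then 1 else 0

/-- Indicator of a nested pair of cherries. -/
noncomputable def J (S : V → V → Prop) (r : V → V → ℕ) (a b c d : V) : ℝ :=
  if S a b ∧ S a d ∧ S d c ∧ S b c ∧ r a b < r a d ∧ r a d < r d c ∧ r d c < r b c then 1 else 0

theorem nested {S : V → V → Prop} {r : V → V → ℕ} (h : Good S r) {a b c d : V}
    (hab : S a b) (hbc : S b c) (had : S a d) (hdc : S d c)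
    (h0 : r a b < r b c) (h0' : r a d < r d c) (h1 : r a b < r a d) : r d c < r b c := by
  by_contra hcon
  push Not at hcon
  have hbd : b ≠ d := by rintro rfl; exact lt_irrefl _ h1
  rcases hcon.lt_or_eq with hlt | heq
  · rcases lt_trichotomy (r b c) (r a d) with h3 | h3 | h3
    · refine h.av a b c d hab hbc (h.symm _ _ hdc) (h.symm _ _ had) h0 ?_ ?_
      · rw [h.rsymm d a]; exact h3
      · rw [h.rsymm d a, h.rsymm c d]; exact h0'
    · rcases h.inj _ _ _ _ hbc had h3 with ⟨h4, h5⟩ | ⟨h4, h5⟩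
      · subst h4; exact h.irr _ hab
      · exact hbd h4
    · refine h.av b a d c (h.symm _ _ hab) had hdc (h.symm _ _ hbc) ?_ ?_ ?_
      · rw [h.rsymm b a]; exact h1
      · rw [h.rsymm c b]; exact h3
      · rw [h.rsymm c b]; exact hlt
  · rcases h.inj _ _ _ _ hbc hdc heq with ⟨h4, h5⟩ | ⟨h4, h5⟩
    · exact hbd h4
    · exact hbd (h4.trans h5)

theorem pt1 {S : V → V → Prop} {r : V → V → ℕ} (h : Good S r) (a b c d : V) :
    I S r a b c * I S r a d c ≤ (if b = d then I S r a b c else 0) + J S r a b c d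
      + J S r a d c b := by
  have hJ : ∀ a b c d, 0 ≤ J S r a b c d := by
    intro a b c d; unfold J; split_ifs <;> norm_num
  by_cases h1 : S a b ∧ S b c ∧ r a b < r b c
  swap
  · have : I S r a b c = 0 := if_neg h1
    rw [this]
    have := hJ a b c d
    have := hJ a d c b
    simp only [zero_mul, ite_self]
    linarith
  by_cases h2 : S a d ∧ S d c ∧ r a d < r d c
  swap
  · have e : I S r a d c = 0 := if_neg h2
    have e' : I S r a b c = 1 := if_pos h1
    rw [e, e']
    have := hJ a b c d
    have := hJ a d c b
    have : (0:ℝ) ≤ if b = d then 1 else 0 := by split_ifs <;> norm_num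
    linarith
  have e : I S r a d c = 1 := if_pos h2
  have e' : I S r a b c = 1 := if_pos h1
  rw [e, e']
  have j1 := hJ a b c d
  have j2 := hJ a d c b
  obtain ⟨hab, hbc, h1⟩ := h1
  obtain ⟨had, hdc, h2⟩ := h2
  by_cases hbd : b = d
  · rw [if_pos hbd]; linarith
  rw [if_neg hbd]
  rcases lt_trichotomy (r a b) (r a d) with h3 | h3 | h3
  · have h4 := nested h hab hbc had hdc h1 h2 h3
    have : J S r a b c d = 1 := if_pos ⟨hab, had, hdc, hbc, h3, h2, h4⟩
    linarith
  · rcases h.inj _ _ _ _ hab had h3 with ⟨_, h5⟩ | ⟨h4, h5⟩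
    · exact absurd h5 hbd
    · exact absurd (h5.trans h4) hbd
  · have h4 := nested h had hdc hab hbc h2 h1 h3
    have : J S r a d c b = 1 := if_pos ⟨had, hab, hbc, hdc, h3, h1, h4⟩
    linarith

theorem pt2 {S : V → V → Prop} {r : V → V → ℕ} (h : Good S r) (t : ℕ) (a b c d : V) :
    J S r a b c d + J S r c d a b + Ix S r t b a d * Ix S r t d c b
      ≤ I S r b a d * I S r d c b := by
  have s1 := h.symm a b
  have s1' := h.symm b a
  have s2 := h.symm b c
  have s2' := h.symm c b
  have s3 := h.symm c d
  have s3' := h.symm d c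
  have s4 := h.symm a d
  have s4' := h.symm d a
  have r1 := h.rsymm a b
  have r2 := h.rsymm b c
  have r3 := h.rsymm c d
  have r4 := h.rsymm d a
  unfold J Ix I
  split_ifs <;> first | (norm_num; done) | (exfalso; grind)

/-- The number of increasing cherries. -/
noncomputable def p (S : V → V → Prop) (r : V → V → ℕ) (a c : V) : ℝ := ∑ b, I S r a b c

/-- The number of crossing cherries. -/
noncomputable def px (S : V → V → Prop) (r : V → V → ℕ) (t : ℕ) (a c : V) : ℝ :=
  ∑ b, Ix S r t a b c

theorem swap4 (f : V → V → V → V → ℝ) :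
    ∑ a, ∑ c, ∑ b, ∑ d, f a c b d = ∑ b, ∑ d, ∑ a, ∑ c, f a c b d := by
  have : ∀ a, ∑ c, ∑ b, ∑ d, f a c b d = ∑ b, ∑ d, ∑ c, f a c b d := by
    intro a
    rw [Finset.sum_comm]
    exact Finset.sum_congr rfl fun b _ => Finset.sum_comm
  simp only [this]
  rw [Finset.sum_comm]
  exact Finset.sum_congr rfl fun b _ => Finset.sum_comm

theorem lem1 {S : V → V → Prop} {r : V → V → ℕ} (h : Good S r) (t : ℕ) :
    ∑ a, ∑ c, p S r a c ^ 2 + ∑ a, ∑ c, px S r t a c * px S r t c a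
      ≤ ∑ a, ∑ c, p S r a c + ∑ a, ∑ c, p S r a c * p S r c a := by
  have e1 : ∑ a, ∑ c, p S r a c ^ 2 = ∑ a, ∑ c, ∑ b, ∑ d, I S r a b c * I S r a d c := by
    simp only [p, sq, Finset.sum_mul_sum]
  have e2 : ∑ a, ∑ c, p S r a c * p S r c a
      = ∑ a, ∑ c, ∑ b, ∑ d, I S r b a d * I S r d c b := by
    simp only [p, Finset.sum_mul_sum]
    exact swap4 _
  have e3 : ∑ a, ∑ c, px S r t a c * px S r t c a
      = ∑ a, ∑ c, ∑ b, ∑ d, Ix S r t b a d * Ix S r t d c b := by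
    simp only [px, Finset.sum_mul_sum]
    exact swap4 _
  have e4 : ∑ a, ∑ c, p S r a c = ∑ a, ∑ c, ∑ b, ∑ d, (if b = d then I S r a b c else 0) := by
    simp [p]
  have e5 : ∑ a, ∑ c, ∑ b, ∑ d, J S r a d c b = ∑ a, ∑ c, ∑ b, ∑ d, J S r a b c d := by
    refine Finset.sum_congr rfl fun a _ => Finset.sum_congr rfl fun c _ => ?_
    exact Finset.sum_comm
  have e6 : ∑ a, ∑ c, ∑ b, ∑ d, J S r c d a b = ∑ a, ∑ c, ∑ b, ∑ d, J S r a b c d := by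
    rw [Finset.sum_comm]
    refine Finset.sum_congr rfl fun a _ => Finset.sum_congr rfl fun c _ => ?_
    exact Finset.sum_comm
  have k1 : ∑ a, ∑ c, ∑ b, ∑ d, I S r a b c * I S r a d c ≤
      ∑ a, ∑ c, ∑ b, ∑ d, ((if b = d then I S r a b c else 0) + J S r a b c d
      + J S r a d c b) := by
    gcongr with a _ c _ b _ d _
    exact pt1 h a b c d
  have k2 : ∑ a, ∑ c, ∑ b, ∑ d, (J S r a b c d + J S r c d a b
      + Ix S r t b a d * Ix S r t d c b) ≤
      ∑ a, ∑ c, ∑ b, ∑ d, I S r b a d * I S r d c b := by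
    gcongr with a _ c _ b _ d _
    exact pt2 h t a b c d
  simp only [Finset.sum_add_distrib] at k1 k2
  rw [e1, e2, e3, e4]
  linarith

theorem I_nonneg (S : V → V → Prop) (r : V → V → ℕ) (a b c : V) : 0 ≤ I S r a b c := by
  unfold I; split_ifs <;> norm_num

theorem Ix_nonneg (S : V → V → Prop) (r : V → V → ℕ) (t : ℕ) (a b c : V) :
    0 ≤ Ix S r t a b c := by
  unfold Ix; split_ifs <;> norm_num

theorem p_nonneg (S : V → V → Prop) (r : V → V → ℕ) (a c : V) : 0 ≤ p S r a c :=
  Finset.sum_nonneg fun _ _ => I_nonneg _ _ _ _ _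

theorem px_nonneg (S : V → V → Prop) (r : V → V → ℕ) (t : ℕ) (a c : V) : 0 ≤ px S r t a c :=
  Finset.sum_nonneg fun _ _ => Ix_nonneg _ _ _ _ _ _

/-- Lemma 1 as a bound for the antisymmetric part. -/
theorem lem1' {S : V → V → Prop} {r : V → V → ℕ} (h : Good S r) (t : ℕ) :
    ∑ a, ∑ c, (p S r a c - p S r c a) ^ 2 ≤
      2 * ∑ a, ∑ c, p S r a c - 2 * ∑ a, ∑ c, px S r t a c * px S r t c a := by
  have h1 := lem1 h t
  have e : ∑ a, ∑ c, (p S r a c - p S r c a) ^ 2 = ∑ a, ∑ c, p S r a c ^ 2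
      + ∑ a, ∑ c, p S r c a ^ 2 - 2 * ∑ a, ∑ c, p S r a c * p S r c a := by
    simp only [Finset.mul_sum, ← Finset.sum_add_distrib, ← Finset.sum_sub_distrib]
    refine Finset.sum_congr rfl fun a _ => Finset.sum_congr rfl fun c _ => ?_
    ring
  have e' : ∑ a, ∑ c, p S r c a ^ 2 = ∑ a, ∑ c, p S r a c ^ 2 := Finset.sum_comm
  rw [e, e']
  linarith

theorem p_split {S : V → V → Prop} {r : V → V → ℕ} (t : ℕ) (a c : V) :
    p S r a c = p (fun a b => S a b ∧ r a b < t) r a c + px S r t a c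
      + p (fun a b => S a b ∧ t ≤ r a b) r a c := by
  unfold p px
  rw [← Finset.sum_add_distrib, ← Finset.sum_add_distrib]
  refine Finset.sum_congr rfl fun b _ => ?_
  unfold I Ix
  split_ifs <;> first | (norm_num; done) | (exfalso; grind)

theorem lem2 {S : V → V → Prop} {r : V → V → ℕ} (h : Good S r) (t : ℕ) :
    ∑ a, ∑ c, px S r t a c ^ 2 ≤ 6 * ∑ a, ∑ c, p S r a c := by
  set L : V → V → Prop := fun a b => S a b ∧ r a b < t with hL
  set R : V → V → Prop := fun a b => S a b ∧ t ≤ r a b with hR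
  have gL : Good L r := h.mono
    (fun a b hab => ⟨h.symm _ _ hab.1, by rw [h.rsymm b a]; exact hab.2⟩) (fun a b hab => hab.1)
  have gR : Good R r := h.mono
    (fun a b hab => ⟨h.symm _ _ hab.1, by rw [h.rsymm b a]; exact hab.2⟩) (fun a b hab => hab.1)
  have sp : ∀ a c, p S r a c = p L r a c + px S r t a c + p R r a c := fun a c => p_split t a c
  have b0 := lem1' h t
  have bL := lem1' gL t
  have bR := lem1' gR t
  have nn : ∀ T : V → V → Prop, 0 ≤ ∑ a, ∑ c, px T r t a c * px T r t c a := fun T =>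
    Finset.sum_nonneg fun a _ => Finset.sum_nonneg fun c _ =>
      mul_nonneg (px_nonneg _ _ _ _ _) (px_nonneg _ _ _ _ _)
  have nS := nn S
  have nL := nn L
  have nR := nn R
  have nx : 0 ≤ ∑ a, ∑ c, px S r t a c :=
    Finset.sum_nonneg fun a _ => Finset.sum_nonneg fun c _ => px_nonneg _ _ _ _ _
  have esum : ∑ a, ∑ c, p S r a c = ∑ a, ∑ c, p L r a c + ∑ a, ∑ c, px S r t a c
      + ∑ a, ∑ c, p R r a c := by
    simp only [sp, Finset.sum_add_distrib]
  have e' : ∑ a, ∑ c, px S r t c a ^ 2 = ∑ a, ∑ c, px S r t a c ^ 2 := Finset.sum_comm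
  have key : ∑ a, ∑ c, (px S r t a c ^ 2 + px S r t c a ^ 2) ≤
      ∑ a, ∑ c, (3 * (p S r a c - p S r c a) ^ 2 + 3 * (p L r a c - p L r c a) ^ 2
        + 3 * (p R r a c - p R r c a) ^ 2 + 2 * (px S r t a c * px S r t c a)) := by
    refine Finset.sum_le_sum fun a _ => Finset.sum_le_sum fun c _ => ?_
    have h1 := sp a c
    have h2 := sp c a
    have h3 : px S r t a c - px S r t c a = (p S r a c - p S r c a) - (p L r a c - p L r c a)
      - (p R r a c - p R r c a) := by rw [h1, h2]; ring
    generalize p S r a c - p S r c a = x at *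
    generalize p L r a c - p L r c a = y at *
    generalize p R r a c - p R r c a = z at *
    have h4 : (px S r t a c - px S r t c a) ^ 2 ≤ 3 * x ^ 2 + 3 * y ^ 2 + 3 * z ^ 2 := by
      rw [h3]
      nlinarith [sq_nonneg (x + y), sq_nonneg (x + z), sq_nonneg (y - z)]
    nlinarith
  simp only [Finset.sum_add_distrib, ← Finset.mul_sum] at key
  linarith

/-- The block at level `i + 1` with index `j`. -/
def Sb (S : V → V → Prop) (r : V → V → ℕ) (i j : ℕ) (a b : V) : Prop :=
  S a b ∧ r a b / 2 ^ (i + 1) = j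

theorem Sb_good {S : V → V → Prop} {r : V → V → ℕ} (h : Good S r) (i j : ℕ) :
    Good (Sb S r i j) r :=
  h.mono (fun a b hab => ⟨h.symm _ _ hab.1, by rw [h.rsymm b a]; exact hab.2⟩)
    (fun a b hab => hab.1)

/-- Crossing cherries at a node. -/
noncomputable def xx (S : V → V → Prop) (r : V → V → ℕ) (i j : ℕ) (a c : V) : ℝ :=
  px (Sb S r i j) r ((2 * j + 1) * 2 ^ i) a c

theorem Ix_pos_of {S : V → V → Prop} {r : V → V → ℕ} {i j : ℕ} {a c : V}
    (h : xx S r i j a c ≠ 0) : ∃ b, Sb S r i j a b ∧ Sb S r i j b c ∧ r a b < r b c := by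
  unfold xx px at h
  obtain ⟨b, _, hb⟩ := Finset.exists_ne_zero_of_sum_ne_zero h
  refine ⟨b, ?_⟩
  unfold Ix at hb
  by_contra hcon
  apply hb
  rw [if_neg]
  rintro ⟨h1, h2, h3, h4⟩
  exact hcon ⟨h1, h2, by omega⟩

theorem xx_disj_lt {S : V → V → Prop} {r : V → V → ℕ} (h : Good S r) {i j j' : ℕ} {a c : V}
    (hj : j < j') (h1 : xx S r i j a c ≠ 0) (h2 : xx S r i j' a c ≠ 0) : False := by
  obtain ⟨b, hab, hbc, hb⟩ := Ix_pos_of h1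
  obtain ⟨d, had, hdc, hd⟩ := Ix_pos_of h2
  refine h.av a b c d hab.1 hbc.1 (h.symm _ _ hdc.1) (h.symm _ _ had.1) hb ?_ ?_
  · rw [h.rsymm d a]
    have : r b c / 2 ^ (i + 1) < r a d / 2 ^ (i + 1) := by rw [hbc.2, had.2]; exact hj
    by_contra hcon
    push Not at hcon
    have := Nat.div_le_div_right (c := 2 ^ (i + 1)) hcon
    omega
  · rw [h.rsymm d a, h.rsymm c d]; exact hd

theorem xx_disj {S : V → V → Prop} {r : V → V → ℕ} (h : Good S r) {i j j' : ℕ} {a c : V}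
    (hj : j' ≠ j) : xx S r i j a c * xx S r i j' a c = 0 := by
  by_contra hcon
  have h1 := left_ne_zero_of_mul hcon
  have h2 := right_ne_zero_of_mul hcon
  rcases lt_or_gt_of_ne hj with h3 | h3
  · exact xx_disj_lt h h3 h2 h1
  · exact xx_disj_lt h h3 h1 h2

theorem sq_sum_xx {S : V → V → Prop} {r : V → V → ℕ} (h : Good S r) (i M : ℕ) (a c : V) :
    (∑ j ∈ range M, xx S r i j a c) ^ 2 = ∑ j ∈ range M, xx S r i j a c ^ 2 := by
  rw [sq, Finset.sum_mul_sum]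
  refine Finset.sum_congr rfl fun j hj => ?_
  rw [Finset.sum_eq_single j, sq]
  · intro j' _ hne
    exact xx_disj h hne
  · intro h'; exact absurd hj h'

theorem sum_Sb_le {S : V → V → Prop} {r : V → V → ℕ} (i M : ℕ) (a b c : V) :
    ∑ j ∈ range M, I (Sb S r i j) r a b c ≤ I S r a b c := by
  calc ∑ j ∈ range M, I (Sb S r i j) r a b c
      ≤ ∑ j ∈ range M, (if r a b / 2 ^ (i + 1) = j then I S r a b c else 0) := by
        refine Finset.sum_le_sum fun j _ => ?_
        unfold I Sb
        split_ifs <;> first | (norm_num; done) | (exfalso; tauto)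
    _ ≤ I S r a b c := by
        rw [Finset.sum_ite_eq]
        have := I_nonneg S r a b c
        split_ifs <;> linarith

theorem sum_p_Sb_le {S : V → V → Prop} {r : V → V → ℕ} (i M : ℕ) :
    ∑ j ∈ range M, ∑ a, ∑ c, p (Sb S r i j) r a c ≤ ∑ a, ∑ c, p S r a c := by
  rw [Finset.sum_comm]
  refine Finset.sum_le_sum fun a _ => ?_
  rw [Finset.sum_comm]
  refine Finset.sum_le_sum fun c _ => ?_
  unfold p
  rw [Finset.sum_comm]
  exact Finset.sum_le_sum fun b _ => sum_Sb_le i M a b c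

theorem cs2 (f : V → V → ℝ) :
    (∑ a, ∑ c, f a c) ^ 2 ≤ (Fintype.card V : ℝ) ^ 2 * ∑ a, ∑ c, f a c ^ 2 := by
  have h := sq_sum_le_card_mul_sum_sq (s := (Finset.univ : Finset (V × V)))
    (f := fun x => f x.1 x.2)
  rw [Fintype.sum_prod_type, Fintype.sum_prod_type] at h
  simp only [Finset.card_univ, Fintype.card_prod] at h
  push_cast at h
  rw [sq (Fintype.card V : ℝ)]
  exact h

theorem lem3 {S : V → V → Prop} {r : V → V → ℕ} (h : Good S r) (i M : ℕ) :
    (∑ a, ∑ c, ∑ j ∈ range M, xx S r i j a c) ^ 2 ≤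
      (Fintype.card V : ℝ) ^ 2 * (6 * ∑ a, ∑ c, p S r a c) := by
  refine (cs2 _).trans ?_
  gcongr
  simp only [sq_sum_xx h]
  calc ∑ a, ∑ c, ∑ j ∈ range M, xx S r i j a c ^ 2
      = ∑ j ∈ range M, ∑ a, ∑ c, xx S r i j a c ^ 2 := by
        symm
        rw [Finset.sum_comm]
        exact Finset.sum_congr rfl fun a _ => Finset.sum_comm
    _ ≤ ∑ j ∈ range M, 6 * ∑ a, ∑ c, p (Sb S r i j) r a c := by
        refine Finset.sum_le_sum fun j _ => ?_
        exact lem2 (Sb_good h i j) _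
    _ ≤ 6 * ∑ a, ∑ c, p S r a c := by
        rw [← Finset.mul_sum]
        have := sum_p_Sb_le (S := S) (r := r) i M
        linarith

theorem exists_level {u v K : ℕ} (huv : u < v) (hv : v < 2 ^ K) :
    ∃ i < K, u / 2 ^ (i + 1) = v / 2 ^ (i + 1) ∧
      u < (2 * (u / 2 ^ (i + 1)) + 1) * 2 ^ i ∧ (2 * (u / 2 ^ (i + 1)) + 1) * 2 ^ i ≤ v := by
  have hex : ∃ k, u / 2 ^ k = v / 2 ^ k :=
    ⟨K, by rw [Nat.div_eq_of_lt hv, Nat.div_eq_of_lt (huv.trans hv)]⟩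
  have hs := Nat.find_spec hex
  have hle : Nat.find hex ≤ K :=
    Nat.find_min' hex (by rw [Nat.div_eq_of_lt hv, Nat.div_eq_of_lt (huv.trans hv)])
  have hmin := fun m => Nat.find_min hex (m := m)
  generalize Nat.find hex = k at *
  rcases k with _ | i
  · simp at hs; omega
  refine ⟨i, by omega, hs, ?_⟩
  have hne : u / 2 ^ i ≠ v / 2 ^ i := hmin i (by omega)
  have hle' : u / 2 ^ i ≤ v / 2 ^ i := Nat.div_le_div_right huv.le
  rw [pow_succ, ← Nat.div_div_eq_div_mul, ← Nat.div_div_eq_div_mul] at hs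
  rw [pow_succ, ← Nat.div_div_eq_div_mul]
  have hpos : 0 < 2 ^ i := by positivity
  have e1 : 2 * (u / 2 ^ i / 2) + 1 = v / 2 ^ i := by omega
  constructor
  · rw [← Nat.div_lt_iff_lt_mul hpos]; omega
  · rw [← Nat.le_div_iff_mul_le hpos]; omega

theorem lem4 {S : V → V → Prop} {r : V → V → ℕ} {K : ℕ}
    (hr : ∀ a b, r a b < 2 ^ K) (a c : V) :
    p S r a c ≤ ∑ i ∈ range K, ∑ j ∈ range (2 ^ K), xx S r i j a c := by
  have e : ∑ i ∈ range K, ∑ j ∈ range (2 ^ K), xx S r i j a c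
      = ∑ b, ∑ i ∈ range K, ∑ j ∈ range (2 ^ K),
        Ix (Sb S r i j) r ((2 * j + 1) * 2 ^ i) a b c := by
    symm
    rw [Finset.sum_comm]
    exact Finset.sum_congr rfl fun a _ => Finset.sum_comm
  rw [e]
  refine Finset.sum_le_sum fun b _ => ?_
  by_cases hI : S a b ∧ S b c ∧ r a b < r b c
  · have e1 : I S r a b c = 1 := if_pos hI
    rw [e1]
    obtain ⟨hab, hbc, hlt⟩ := hI
    obtain ⟨i, hi, h1, h2, h3⟩ := exists_level hlt (hr b c)
    have hj : r a b / 2 ^ (i + 1) ∈ range (2 ^ K) :=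
      Finset.mem_range.mpr (lt_of_le_of_lt (Nat.div_le_self _ _) (hr a b))
    have e2 : Ix (Sb S r i (r a b / 2 ^ (i + 1))) r
        ((2 * (r a b / 2 ^ (i + 1)) + 1) * 2 ^ i) a b c = 1 :=
      if_pos ⟨⟨hab, rfl⟩, ⟨hbc, h1.symm⟩, h2, h3⟩
    rw [← e2]
    refine le_trans ?_ (Finset.single_le_sum (f := fun i => ∑ j ∈ range (2 ^ K),
        Ix (Sb S r i j) r ((2 * j + 1) * 2 ^ i) a b c) ?_ (Finset.mem_range.mpr hi))
    · exact Finset.single_le_sum (f := fun j =>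
        Ix (Sb S r i j) r ((2 * j + 1) * 2 ^ i) a b c) (fun _ _ => Ix_nonneg _ _ _ _ _ _) hj
    · exact fun _ _ => Finset.sum_nonneg fun _ _ => Ix_nonneg _ _ _ _ _ _
  · have e1 : I S r a b c = 0 := if_neg hI
    rw [e1]
    exact Finset.sum_nonneg fun _ _ => Finset.sum_nonneg fun _ _ => Ix_nonneg _ _ _ _ _ _

theorem lem5 {S : V → V → Prop} {r : V → V → ℕ} {K : ℕ} (h : Good S r)
    (hr : ∀ a b, r a b < 2 ^ K) :
    ∑ a, ∑ c, p S r a c ≤ 6 * (K : ℝ) ^ 2 * (Fintype.card V : ℝ) ^ 2 := by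
  set X := ∑ a, ∑ c, p S r a c with hX
  have hX0 : 0 ≤ X := Finset.sum_nonneg fun a _ => Finset.sum_nonneg fun c _ => p_nonneg _ _ _ _
  set C : ℕ → ℝ := fun i => ∑ a, ∑ c, ∑ j ∈ range (2 ^ K), xx S r i j a c with hC
  have h1 : X ≤ ∑ i ∈ range K, C i := by
    have e : ∑ i ∈ range K, C i =
        ∑ a, ∑ c, ∑ i ∈ range K, ∑ j ∈ range (2 ^ K), xx S r i j a c := by
      rw [hC, Finset.sum_comm]
      exact Finset.sum_congr rfl fun a _ => Finset.sum_comm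
    rw [e]
    exact Finset.sum_le_sum fun a _ => Finset.sum_le_sum fun c _ => lem4 hr a c
  have h2 : (∑ i ∈ range K, C i) ^ 2 ≤ K * ∑ i ∈ range K, C i ^ 2 := by
    have := sq_sum_le_card_mul_sum_sq (s := range K) (f := C)
    rwa [Finset.card_range] at this
  have h3 : ∑ i ∈ range K, C i ^ 2 ≤ K * ((Fintype.card V : ℝ) ^ 2 * (6 * X)) := by
    have := Finset.sum_le_card_nsmul (range K) (fun i => C i ^ 2)
      ((Fintype.card V : ℝ) ^ 2 * (6 * X)) (fun i _ => lem3 h i (2 ^ K))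
    rwa [Finset.card_range, nsmul_eq_mul] at this
  have h4 : X ^ 2 ≤ K * (K * ((Fintype.card V : ℝ) ^ 2 * (6 * X))) := by
    calc X ^ 2 ≤ (∑ i ∈ range K, C i) ^ 2 := by gcongr
      _ ≤ _ := h2
      _ ≤ _ := by gcongr
  rcases hX0.eq_or_lt with h5 | h5
  · rw [← h5]; positivity
  · have : X * X ≤ X * (6 * (K : ℝ) ^ 2 * (Fintype.card V : ℝ) ^ 2) := by nlinarith
    exact le_of_mul_le_mul_left this h5

/-- Indicator of adjacency. -/
noncomputable def ind (S : V → V → Prop) (a b : V) : ℝ := if S a b then 1 else 0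

theorem pt3 {S : V → V → Prop} {r : V → V → ℕ} (h : Good S r) (a b c : V) :
    ind S a b * ind S c b ≤ I S r a b c + I S r c b a + (if a = c then ind S a b else 0) := by
  have i1 := I_nonneg S r a b c
  have i2 := I_nonneg S r c b a
  have i3 : (0 : ℝ) ≤ (if a = c then ind S a b else 0) := by
    unfold ind; split_ifs <;> norm_num
  by_cases hab : S a b
  swap
  · have : ind S a b = 0 := if_neg hab
    rw [this, zero_mul]; rw [this] at i3; linarith
  by_cases hcb : S c b
  swap
  · have : ind S c b = 0 := if_neg hcb
    rw [this, mul_zero]; linarith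
  have e1 : ind S a b = 1 := if_pos hab
  have e2 : ind S c b = 1 := if_pos hcb
  rw [e1, e2]
  rw [e1] at i3
  by_cases hac : a = c
  · rw [if_pos hac]; linarith
  have hba := h.symm _ _ hab
  have hbc := h.symm _ _ hcb
  have r1 := h.rsymm a b
  have r2 := h.rsymm c b
  rcases lt_trichotomy (r a b) (r b c) with h1 | h1 | h1
  · have : I S r a b c = 1 := if_pos ⟨hab, hbc, h1⟩
    linarith
  · rcases h.inj _ _ _ _ hab hbc h1 with ⟨h2, h3⟩ | ⟨h2, h3⟩
    · exact absurd (h2.trans h3) hac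
    · exact absurd h2 hac
  · have : I S r c b a = 1 := if_pos ⟨hcb, hba, by omega⟩
    linarith

theorem lem6 {S : V → V → Prop} {r : V → V → ℕ} (h : Good S r) :
    (∑ b, ∑ a, ind S a b) ^ 2 ≤ (Fintype.card V : ℝ) *
      (2 * ∑ a, ∑ c, p S r a c + ∑ b, ∑ a, ind S a b) := by
  have h1 := sq_sum_le_card_mul_sum_sq (s := (Finset.univ : Finset V))
    (f := fun b => ∑ a, ind S a b)
  rw [Finset.card_univ] at h1
  refine h1.trans ?_
  gcongr
  have e : ∀ b, (∑ a, ind S a b) ^ 2 = ∑ a, ∑ c, ind S a b * ind S c b := by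
    intro b; rw [sq, Finset.sum_mul_sum]
  simp only [e]
  have k : ∑ b, ∑ a, ∑ c, ind S a b * ind S c b ≤
      ∑ b, ∑ a, ∑ c, (I S r a b c + I S r c b a + (if a = c then ind S a b else 0)) :=
    Finset.sum_le_sum fun b _ => Finset.sum_le_sum fun a _ => Finset.sum_le_sum fun c _ =>
      pt3 h a b c
  refine k.trans (le_of_eq ?_)
  simp only [Finset.sum_add_distrib]
  have e1 : ∑ b, ∑ a, ∑ c, I S r a b c = ∑ a, ∑ c, p S r a c := by
    rw [Finset.sum_comm]
    exact Finset.sum_congr rfl fun a _ => Finset.sum_comm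
  have e2 : ∑ b, ∑ a, ∑ c, I S r c b a = ∑ a, ∑ c, p S r a c := by
    rw [← e1]
    exact Finset.sum_congr rfl fun a _ => Finset.sum_comm
  rw [e1, e2]
  simp
  ring

end LexC4

namespace LexC4

open Finset Classical

/-- The rank of an edge. -/
noncomputable def rk (G : EOGraph) (a b : Fin G.nv) : ℕ :=
  (G.graph.edgeFinset.filter (fun f => G.label f < G.label s(a, b))).card

theorem rk_lt_iff (G : EOGraph) {a b c d : Fin G.nv} (hab : G.graph.Adj a b) :
    rk G a b < rk G c d ↔ G.label s(a, b) < G.label s(c, d) := by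
  constructor
  · intro h
    by_contra hcon
    push Not at hcon
    refine absurd h (not_lt.mpr (Finset.card_le_card ?_))
    intro f hf
    rw [Finset.mem_filter] at hf ⊢
    exact ⟨hf.1, hf.2.trans_le hcon⟩
  · intro h
    apply Finset.card_lt_card
    rw [Finset.ssubset_iff_of_subset]
    · refine ⟨s(a, b), ?_, ?_⟩
      · rw [Finset.mem_filter]
        exact ⟨by simpa using hab, h⟩
      · simp
    · intro f hf
      rw [Finset.mem_filter] at hf ⊢
      exact ⟨hf.1, hf.2.trans h⟩

theorem good_of_avoids (G : EOGraph) (hv : G.Valid) (ha : G.Avoids C4_1243) :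
    Good G.graph.Adj (rk G) where
  symm := fun a b h => h.symm
  irr := fun a h => G.graph.loopless.irrefl a h
  rsymm := fun a b => by unfold rk; rw [Sym2.eq_swap]
  inj := by
    intro a b c d hab hcd he
    have h1 : ¬ G.label s(a, b) < G.label s(c, d) := by
      rw [← rk_lt_iff G hab]; omega
    have h2 : ¬ G.label s(c, d) < G.label s(a, b) := by
      rw [← rk_lt_iff G hcd]; omega
    have h3 := hv s(a, b) hab s(c, d) hcd (by omega)
    simpa using h3
  av := by
    intro a b c d hab hbc hcd hda h1 h2 h3
    rw [rk_lt_iff G hab] at h1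
    rw [rk_lt_iff G hbc] at h2
    rw [rk_lt_iff G hda] at h3
    apply ha
    have hac : a ≠ c := by
      rintro rfl; rw [Sym2.eq_swap] at h1; exact lt_irrefl _ h1
    have hbd : b ≠ d := by
      rintro rfl; rw [Sym2.eq_swap (a := b) (b := a)] at h2; exact absurd h2 (not_lt.mpr h1.le)
    have nab := hab.ne
    have nbc := hbc.ne
    have ncd := hcd.ne
    have nda := hda.ne
    let f : Fin 4 → Fin G.nv := ![a, b, c, d]
    have hf : Function.Injective f := by
      intro i j hij
      fin_cases i <;> fin_cases j <;> simp [f] at hij ⊢ <;> grind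
    let g : ℕ → ℕ := fun k => if k = 1 then G.label s(a, b) else if k = 2 then G.label s(b, c)
      else if k = 3 then G.label s(d, a) else G.label s(c, d)
    have key : ∀ i j : Fin 4, C4_1243.graph.Adj i j → G.graph.Adj (f i) (f j) ∧
        G.label s(f i, f j) = g (C4_1243.label s(i, j)) ∧
        (1 ≤ C4_1243.label s(i, j) ∧ C4_1243.label s(i, j) ≤ 4) := by
      intro i j hij
      have hba := hab.symm
      have hcb := hbc.symm
      have hdc := hcd.symm
      have had := hda.symm
      have e1 : s(b, a) = s(a, b) := Sym2.eq_swap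
      have e2 : s(c, b) = s(b, c) := Sym2.eq_swap
      have e3 : s(d, c) = s(c, d) := Sym2.eq_swap
      have e4 : s(a, d) = s(d, a) := Sym2.eq_swap
      have hij' : i ≠ j ∧ (j = i + 1 ∨ i = j + 1) := by
        simpa [C4_1243, SimpleGraph.fromRel_adj] using hij
      clear hij
      fin_cases i <;> fin_cases j <;>
        first
        | exact absurd hij' (by decide)
        | (simp [C4_1243, symLabel, f, g, e1, e2, e3, e4, *])
    refine ⟨⟨f, hf⟩, fun i j hij => (key i j hij).1, fun i j k l hij hkl => ?_⟩
    obtain ⟨-, k1, k2, k3⟩ := key i j hij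
    obtain ⟨-, k4, k5, k6⟩ := key k l hkl
    change _ ↔ G.label s(f i, f j) < G.label s(f k, f l)
    rw [k1, k4]
    generalize C4_1243.label s(i, j) = u at *
    generalize C4_1243.label s(k, l) = v at *
    simp only [g]
    interval_cases u <;> interval_cases v <;> simp <;> omega

theorem rk_lt (G : EOGraph) (hn : 2 ≤ G.nv) (a b : Fin G.nv) :
    rk G a b < 2 ^ (2 * Nat.clog 2 G.nv) := by
  have h1 : rk G a b ≤ G.graph.edgeFinset.card := Finset.card_le_card (Finset.filter_subset _ _)
  have h2 := G.graph.card_edgeFinset_le_card_choose_two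
  rw [Fintype.card_fin] at h2
  have h3 : G.nv.choose 2 < G.nv ^ 2 := by
    rw [Nat.choose_two_right]
    have : G.nv * (G.nv - 1) ≤ G.nv * G.nv := Nat.mul_le_mul_left _ (Nat.sub_le _ _)
    have : 0 < G.nv * G.nv := by positivity
    rw [sq]; omega
  have h4 : G.nv ≤ 2 ^ Nat.clog 2 G.nv := Nat.le_pow_clog (by norm_num) _
  have h5 : G.nv ^ 2 ≤ (2 ^ Nat.clog 2 G.nv) ^ 2 := Nat.pow_le_pow_left h4 2
  rw [← pow_mul, mul_comm] at h5
  omega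

theorem sum_ind (G : EOGraph) : ∑ b, ∑ a, ind G.graph.Adj a b = 2 * (G.edges : ℝ) := by
  have h := G.graph.sum_degrees_eq_twice_card_edges
  have e : G.edges = G.graph.edgeFinset.card := by
    unfold EOGraph.edges
    rw [← SimpleGraph.coe_edgeFinset, Set.ncard_coe_finset]
  rw [e]
  have h' : ((∑ v, G.graph.degree v : ℕ) : ℝ) = 2 * (G.graph.edgeFinset.card : ℝ) := by
    rw [h]; push_cast; rfl
  rw [← h', Nat.cast_sum]
  refine Finset.sum_congr rfl fun b _ => ?_
  unfold ind
  rw [Finset.sum_boole, ← SimpleGraph.card_neighborFinset_eq_degree]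
  congr 2
  ext a
  simp [SimpleGraph.adj_comm]

theorem clog_le {n : ℕ} (hn : 2 ≤ n) : (Nat.clog 2 n : ℝ) ≤ 2 * Real.logb 2 n := by
  have hpos : (0 : ℝ) < n := by positivity
  have h1 : 1 ≤ Real.logb 2 (n : ℝ) := by
    rw [Real.le_logb_iff_rpow_le (by norm_num) hpos]
    simpa using (by exact_mod_cast hn : (2 : ℝ) ≤ n)
  have h2 : 2 ^ (Nat.clog 2 n).pred < n := Nat.pow_pred_clog_lt_self (by norm_num) (by omega)
  have h3 : ((Nat.clog 2 n).pred : ℝ) ≤ Real.logb 2 (n : ℝ) := by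
    rw [Real.le_logb_iff_rpow_le (by norm_num) hpos, Real.rpow_natCast]
    exact_mod_cast h2.le
  have h4 : Nat.clog 2 n ≤ (Nat.clog 2 n).pred + 1 := by rw [Nat.pred_eq_sub_one]; omega
  have h5 : (Nat.clog 2 n : ℝ) ≤ (Nat.clog 2 n).pred + 1 := by exact_mod_cast h4
  linarith

theorem edges_le (G : EOGraph) (hv : G.Valid) (ha : G.Avoids C4_1243) (hn : 2 ≤ G.nv) :
    (G.edges : ℝ) ≤ 10 * (G.nv : ℝ) ^ ((3 : ℝ) / 2) * Real.logb 2 (G.nv : ℝ) := by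
  have hg := good_of_avoids G hv ha
  have h5 := lem5 hg (rk_lt G hn)
  have h6 := lem6 hg
  rw [sum_ind] at h6
  rw [Fintype.card_fin] at h5 h6
  have hc := clog_le hn
  have hpos : (0 : ℝ) < G.nv := by
    have : 0 < G.nv := by omega
    exact_mod_cast this
  have hn2 : (2 : ℝ) ≤ G.nv := by exact_mod_cast hn
  have hl : 1 ≤ Real.logb 2 (G.nv : ℝ) := by
    rw [Real.le_logb_iff_rpow_le (by norm_num) hpos]
    simpa using hn2
  set n : ℝ := (G.nv : ℝ)
  set m : ℝ := (G.edges : ℝ)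
  set l : ℝ := Real.logb 2 n
  have hK : ((2 * Nat.clog 2 G.nv : ℕ) : ℝ) ^ 2 ≤ (4 * l) ^ 2 := by
    have h0 : ((2 * Nat.clog 2 G.nv : ℕ) : ℝ) ≤ 4 * l := by
      push_cast
      linarith
    exact pow_le_pow_left₀ (Nat.cast_nonneg _) h0 2
  have hX : ∑ a, ∑ c, p G.graph.Adj (rk G) a c ≤ 96 * l ^ 2 * n ^ 2 := by
    refine h5.trans ?_
    have : 6 * ((2 * Nat.clog 2 G.nv : ℕ) : ℝ) ^ 2 * n ^ 2 ≤ 6 * (4 * l) ^ 2 * n ^ 2 := by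
      gcongr
    refine this.trans (le_of_eq ?_)
    ring
  have h7 : (2 * m) ^ 2 ≤ n * (2 * (96 * l ^ 2 * n ^ 2) + 2 * m) := by
    refine h6.trans ?_
    gcongr
  have hl2 : 1 ≤ l ^ 2 := by nlinarith
  have hn3 : n ^ 2 ≤ l ^ 2 * n ^ 3 := by
    have : n ^ 2 ≤ n ^ 3 := by nlinarith [sq_nonneg n]
    have : 1 * n ^ 3 ≤ l ^ 2 * n ^ 3 := by gcongr
    linarith
  have h8 : m ^ 2 ≤ 100 * (l ^ 2 * n ^ 3) := by nlinarith [sq_nonneg (m - n)]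
  have hp : (n ^ ((3 : ℝ) / 2)) ^ 2 = n ^ 3 := by
    rw [← Real.rpow_natCast, ← Real.rpow_mul hpos.le, ← Real.rpow_natCast n 3]
    norm_num
  have h9 : m ^ 2 ≤ (10 * n ^ ((3 : ℝ) / 2) * l) ^ 2 := by
    have : (10 * n ^ ((3 : ℝ) / 2) * l) ^ 2 = 100 * (l ^ 2 * (n ^ ((3 : ℝ) / 2)) ^ 2) := by ring
    rw [this, hp]; exact h8
  exact le_of_sq_le_sq h9 (by positivity)

end LexC4

/-- There is a constant `C > 0` such that for all `n ≥ 2`,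
`lex(n, C_4^{1243}) ≤ C · n^{3/2} · log n`. -/
theorem lex_C4_1243_upper :
    ∃ C : ℝ, 0 < C ∧ ∀ n : ℕ, 2 ≤ n →
      (lexFam n {C4_1243} : ℝ) ≤ C * (n : ℝ) ^ ((3 : ℝ) / 2) * Real.logb 2 (n : ℝ) := by
  refine ⟨10, by norm_num, fun n hn => ?_⟩
  have hpos : (0 : ℝ) ≤ 10 * (n : ℝ) ^ ((3 : ℝ) / 2) * Real.logb 2 (n : ℝ) := by
    have : 0 ≤ Real.logb 2 (n : ℝ) :=
      Real.logb_nonneg (by norm_num) (by exact_mod_cast (by omega : 1 ≤ n))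
    positivity
  have h : lexFam n {C4_1243} ≤ ⌊10 * (n : ℝ) ^ ((3 : ℝ) / 2) * Real.logb 2 (n : ℝ)⌋₊ := by
    unfold lexFam
    refine csSup_le' ?_
    rintro m ⟨G, rfl, hv, ha, rfl⟩
    exact Nat.le_floor (LexC4.edges_le G hv (ha _ rfl) hn)
  exact (Nat.cast_le.mpr h).trans (Nat.floor_le hpos)
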